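/- arXiv:2309.10377 — 3 statements merged into one kernel-verified Lean document; each statement's English description precedes it below -/
import Mathlib

section
/- Let D = (V, A) be a directed graph with nonnegative arc costs c, let s, t ∈ V, and let p be a shortest simple s-t-path with ℓ arcs. For any node v ∈ V, let S be a set of simple s-v-paths such that no path in S dominates another path in S with respect to γ_p and no two distinct paths in S have equal γ_p-cost. Then S has cardinality at most ℓ + 1. -/
/-- The arcs of a walk, given as the list of consecutive vertex pairs. -/
def arcsOf {V : Type*} (q : List V) : List (V × V) := q.zip q.tail

/-- `q` is a walk (a finite sequence of consecutive arcs, possibly repeating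
nodes) from `s` to `t` in the digraph on `V` with arc relation `A`. -/
def IsDiWalk {V : Type*} (A : V → V → Prop) (s t : V) (q : List V) : Prop :=
  q ≠ [] ∧ q.head? = some s ∧ q.getLast? = some t ∧ q.Chain' A

/-- `q` is a simple path from `s` to `t`: a walk visiting no node twice. -/
def IsDiPath {V : Type*} (A : V → V → Prop) (s t : V) (q : List V) : Prop :=
  IsDiWalk A s t q ∧ q.Nodup

/-- The cost of a walk: the sum of the costs of its arcs. -/
def pathCost {V : Type*} (c : V → V → NNReal) (q : List V) : NNReal :=
  ((arcsOf q).map fun e => c e.1 e.2).sum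

/-- Second component `γ_{p,2}` of the biobjective cost: the number of arcs of
`q` (with multiplicity along `q`) that are arcs of `p`. -/
def gammaTwo {V : Type*} [DecidableEq V] (p q : List V) : ℕ :=
  ((arcsOf q).filter fun e => decide (e ∈ arcsOf p)).length

/-- `q` dominates `q'` w.r.t. the biobjective cost `γ_p = (pathCost c ·, gammaTwo p ·)`. -/
def DominatesBi {V : Type*} [DecidableEq V] (c : V → V → NNReal) (p q q' : List V) : Prop :=
  pathCost c q ≤ pathCost c q' ∧ gammaTwo p q ≤ gammaTwo p q' ∧
    (pathCost c q < pathCost c q' ∨ gammaTwo p q < gammaTwo p q')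

/-- A simple `s`-`t`-path is efficient w.r.t. `γ_p` if no simple `s`-`t`-path dominates it. -/
def EfficientPath {V : Type*} [DecidableEq V] (A : V → V → Prop) (c : V → V → NNReal)
    (s t : V) (p q : List V) : Prop :=
  IsDiPath A s t q ∧ ∀ r, IsDiPath A s t r → ¬ DominatesBi c p r q

/-- `p` is a shortest simple `s`-`t`-path w.r.t. `c`. -/
def IsShortestPath {V : Type*} (A : V → V → Prop) (c : V → V → NNReal)
    (s t : V) (p : List V) : Prop :=
  IsDiPath A s t p ∧ ∀ r, IsDiPath A s t r → pathCost c p ≤ pathCost c r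

/-- `p₂` is a second shortest simple `s`-`t`-path (w.r.t. the shortest path `p₁`). -/
def IsSecondShortestPath {V : Type*} (A : V → V → Prop) (c : V → V → NNReal)
    (s t : V) (p₁ p₂ : List V) : Prop :=
  IsDiPath A s t p₂ ∧ p₂ ≠ p₁ ∧
    ∀ r, IsDiPath A s t r → r ≠ p₁ → pathCost c p₂ ≤ pathCost c r

/-- The arcs of a list without repeated nodes are pairwise distinct. -/
theorem arcsOf_nodup {V : Type*} {q : List V} (hq : q.Nodup) : (arcsOf q).Nodup := by
  refine List.Nodup.of_map Prod.snd ?_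
  rw [arcsOf, List.map_snd_zip (by simp)]
  exact hq.tail

/-- A walk without repeated nodes shares at most as many arcs with `p` as `p` has. -/
theorem gammaTwo_le_length {V : Type*} [DecidableEq V] (p : List V) {q : List V}
    (hq : q.Nodup) : gammaTwo p q ≤ (arcsOf p).length := by
  refine (((arcsOf_nodup hq).filter _).subperm fun e he => ?_).length_le
  simpa using (List.mem_filter.mp he).2

/-- Let `p` be a shortest simple `s`-`t`-path with `ℓ` arcs. For any node
`v`, a set `S` of simple `s`-`v`-paths that is pairwise non-dominating w.r.t. `γ_p` and has
pairwise distinct `γ_p`-costs has cardinality at most `ℓ + 1`. -/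
theorem nondominatedSet_card_le {V : Type*} [DecidableEq V]
    (A : V → V → Prop) (c : V → V → NNReal) (s t : V) (p : List V) (ℓ : ℕ)
    (hp : IsShortestPath A c s t p) (hℓ : (arcsOf p).length = ℓ)
    (v : V) (S : Set (List V))
    (hS : ∀ q ∈ S, IsDiPath A s v q)
    (hdom : ∀ q ∈ S, ∀ q' ∈ S, ¬ DominatesBi c p q q')
    (hneq : ∀ q ∈ S, ∀ q' ∈ S, q ≠ q' →
      (pathCost c q, gammaTwo p q) ≠ (pathCost c q', gammaTwo p q')) :
    S.Finite ∧ Nat.card S ≤ ℓ + 1 := by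
  have hmaps : Set.MapsTo (gammaTwo p) S (Set.Iic ℓ) := fun q hq =>
    hℓ ▸ gammaTwo_le_length p (hS q hq).2
  have hinj : Set.InjOn (gammaTwo p) S := by
    intro q hq q' hq' h
    by_contra hne
    rcases lt_trichotomy (pathCost c q) (pathCost c q') with hlt | heq | hlt
    · exact hdom q hq q' hq' ⟨hlt.le, h.le, Or.inl hlt⟩
    · exact hneq q hq q' hq' hne (Prod.ext heq h)
    · exact hdom q' hq' q hq ⟨hlt.le, h.ge, Or.inl hlt⟩
  refine ⟨Set.Finite.of_injOn hmaps hinj (Set.finite_Iic ℓ), ?_⟩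
  calc Nat.card S = S.ncard := Nat.card_coe_set_eq S
    _ ≤ (Set.Iic ℓ).ncard := Set.ncard_le_ncard_of_injOn _ hmaps hinj (Set.finite_Iic ℓ)
    _ = ℓ + 1 := by simp [Set.ncard_eq_toFinset_card']
end

section
/- Let D = (V, A) be a directed graph with nonnegative arc costs c, let s, t ∈ V, let p₁ be a shortest simple s-t-path, and assume there exist at least two simple s-t-paths. Consider the set Q of simple s-t-paths of the form q = p₁[s..v] ∘ (v,w) ∘ q[w..t], where v is a node of p₁, (v,w) ∈ A is an arc leaving v that is not an arc of p₁, w is not a node of p₁[s..v], and q[w..t] is a shortest w-t-path among simple w-t-paths avoiding all nodes of p₁[s..v]. Then Q is nonempty, the minimum of c over Q equals the cost of a second shortest simple s-t-path, and every path in Q attaining this minimum is a second shortest simple s-t-path. -/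
/-- The set `Q` of candidate second shortest paths: simple `s`-`t`-paths of the form
`p₁[s..v] ∘ (v,w) ∘ q[w..t]` where `v` is a node of `p₁`, `(v,w)` is an arc leaving `v`
that is not an arc of `p₁`, `w` is not a node of the prefix `p₁[s..v]`, and `q[w..t]` is a
shortest `w`-`t`-path among simple `w`-`t`-paths avoiding all nodes of `p₁[s..v]`. -/
def candidateSet {V : Type*} [DecidableEq V] (A : V → V → Prop) (c : V → V → NNReal)
    (t : V) (p₁ : List V) : Set (List V) :=
  { q | ∃ (pre : List V) (v w : V) (suf : List V),
      q = pre ++ w :: suf ∧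
      pre <+: p₁ ∧ pre.getLast? = some v ∧
      A v w ∧ (v, w) ∉ arcsOf p₁ ∧ w ∉ pre ∧
      IsDiPath A w t (w :: suf) ∧
      (∀ x ∈ pre, x ∉ w :: suf) ∧
      (∀ r, IsDiPath A w t r → (∀ x ∈ pre, x ∉ r) →
        pathCost c (w :: suf) ≤ pathCost c r) }

theorem List.exists_append_head?_ne {α : Type*} :
    ∀ {l₁ l₂ : List α}, l₁ ≠ l₂ →
      ∃ l a b, l₁ = l ++ a ∧ l₂ = l ++ b ∧ a.head? ≠ b.head?
  | [], [], h => absurd rfl h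
  | [], y :: l₂, _ => ⟨[], [], y :: l₂, rfl, rfl, by simp⟩
  | x :: l₁, [], _ => ⟨[], x :: l₁, [], rfl, rfl, by simp⟩
  | x :: l₁, y :: l₂, h => by
    by_cases hxy : x = y
    · subst hxy
      obtain ⟨l, a, b, rfl, rfl, hab⟩ :=
        List.exists_append_head?_ne (l₁ := l₁) (l₂ := l₂) fun h' => h (by rw [h'])
      exact ⟨x :: l, a, b, rfl, rfl, hab⟩
    · exact ⟨[], x :: l₁, y :: l₂, rfl, rfl, by simpa using hxy⟩

/-- A nodup list has no proper prefix with the same last element. -/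
theorem List.Nodup.eq_nil_of_getLast?_append {α : Type*} {l l' : List α} {t : α}
    (h : (l ++ l').Nodup) (hl : l.getLast? = some t) (hl' : (l ++ l').getLast? = some t) :
    l' = [] := by
  by_contra hne
  rw [List.getLast?_append_of_ne_nil _ hne] at hl'
  exact List.disjoint_of_nodup_append h (List.mem_of_getLast? hl) (List.mem_of_getLast? hl')

theorem arcsOf_cons_cons {V : Type*} (x y : V) (l : List V) :
    arcsOf (x :: y :: l) = (x, y) :: arcsOf (y :: l) := rfl

theorem arcsOf_append_cons {V : Type*} (v : V) (l : List V) :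
    ∀ a : List V, arcsOf (a ++ v :: l) = arcsOf (a ++ [v]) ++ arcsOf (v :: l)
  | [] => rfl
  | [x] => rfl
  | x :: y :: a => by
    have h := arcsOf_append_cons v l (y :: a)
    simp only [List.cons_append, arcsOf_cons_cons] at h ⊢
    rw [h]

theorem mem_arcsOf_append_cons_cons {V : Type*} (a : List V) (v w : V) (l : List V) :
    (v, w) ∈ arcsOf (a ++ v :: w :: l) := by
  rw [arcsOf_append_cons, arcsOf_cons_cons]
  simp

theorem exists_append_of_mem_arcsOf {V : Type*} {v w : V} :
    ∀ {q : List V}, (v, w) ∈ arcsOf q → ∃ a l, q = a ++ v :: w :: l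
  | [], h => by simp [arcsOf] at h
  | [x], h => by simp [arcsOf] at h
  | x :: y :: q, h => by
    rw [arcsOf_cons_cons, List.mem_cons, Prod.mk.injEq] at h
    obtain ⟨rfl, rfl⟩ | h := h
    · exact ⟨[], q, rfl⟩
    · obtain ⟨a, l, hal⟩ := exists_append_of_mem_arcsOf h
      exact ⟨x :: a, l, by rw [hal, List.cons_append]⟩

/-- In a simple path each node has at most one successor. -/
theorem eq_of_mem_arcsOf_of_nodup {V : Type*} {a l : List V} {v w x : V}
    (hnd : (a ++ v :: x :: l).Nodup) (h : (v, w) ∈ arcsOf (a ++ v :: x :: l)) : w = x := by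
  obtain ⟨b, m, hbm⟩ := exists_append_of_mem_arcsOf h
  have hva : v ∉ a := fun hv => List.disjoint_of_nodup_append hnd hv (by simp)
  have hvl : v ∉ x :: l := (List.nodup_cons.1 hnd.of_append_right).1
  have htail := ((List.append_cons_inj_of_notMem hva hvl).1 hbm).2.2
  exact (List.cons.inj htail).1.symm

theorem pathCost_append_cons_cons {V : Type*} (c : V → V → NNReal) (a : List V) (v w : V)
    (l : List V) :
    pathCost c (a ++ v :: w :: l) = pathCost c (a ++ [v]) + (c v w + pathCost c (w :: l)) := by
  simp only [pathCost]
  rw [arcsOf_append_cons, arcsOf_cons_cons]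
  simp

theorem finite_setOf_nodup (V : Type*) [Fintype V] : {q : List V | q.Nodup}.Finite :=
  (List.finite_length_le V (Fintype.card V)).subset fun _ h => h.length_le_card

theorem isDiPath_of_mem_candidateSet {V : Type*} [DecidableEq V] {A : V → V → Prop}
    {c : V → V → NNReal} {s t : V} {p₁ q : List V} (hp₁ : IsDiPath A s t p₁)
    (hq : q ∈ candidateSet A c t p₁) : IsDiPath A s t q ∧ q ≠ p₁ := by
  obtain ⟨pre, v, w, suf, rfl, ⟨l, rfl⟩, hv, hvw, harc, -, hsuf, hdisj, -⟩ := hq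
  obtain ⟨a, rfl⟩ := List.getLast?_eq_some_iff.1 hv
  obtain ⟨⟨-, hhead, -, hchain⟩, hnd⟩ := hp₁
  obtain ⟨⟨-, -, hlast, hchain'⟩, hnd'⟩ := hsuf
  refine ⟨⟨⟨by simp, ?_, ?_, ?_⟩, ?_⟩, ?_⟩
  · rw [List.head?_append_of_ne_nil _ (by simp)] at hhead ⊢
    exact hhead
  · rw [List.getLast?_append_of_ne_nil _ (by simp), hlast]
  · refine List.isChain_append.2 ⟨(List.isChain_append.1 hchain).1, hchain', ?_⟩
    simpa using hvw
  · exact List.nodup_append'.2 ⟨(List.nodup_append'.1 hnd).1, hnd', hdisj⟩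
  · intro h
    rw [← h, List.append_assoc] at harc
    exact harc (mem_arcsOf_append_cons_cons a v w suf)

/-- Replacing the part of `r` after its first deviation from `p₁` by a shortest one yields
a candidate that is no more expensive than `r`. -/
theorem exists_mem_candidateSet_pathCost_le {V : Type*} [Fintype V] [DecidableEq V]
    {A : V → V → Prop} {c : V → V → NNReal} {s t : V} {p₁ r : List V}
    (hp₁ : IsDiPath A s t p₁) (hr : IsDiPath A s t r) (hne : r ≠ p₁) :
    ∃ q ∈ candidateSet A c t p₁, pathCost c q ≤ pathCost c r := by
  obtain ⟨pre, r', p', rfl, rfl, hhead⟩ := List.exists_append_head?_ne hne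
  obtain ⟨⟨-, hps, hpt, -⟩, hpnd⟩ := hp₁
  obtain ⟨⟨-, hrs, hrt, hrchain⟩, hrnd⟩ := hr
  have hr'ne : r' ≠ [] := by
    rintro rfl
    rw [List.append_nil] at hrt
    exact hhead (by rw [hpnd.eq_nil_of_getLast?_append hrt hpt])
  have hp'ne : p' ≠ [] := by
    rintro rfl
    rw [List.append_nil] at hpt
    exact hr'ne (hrnd.eq_nil_of_getLast?_append hpt hrt)
  obtain ⟨w, m, rfl⟩ := List.exists_cons_of_ne_nil hr'ne
  obtain ⟨x, l, rfl⟩ := List.exists_cons_of_ne_nil hp'ne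
  have hprene : pre ≠ [] := by
    rintro rfl
    exact hhead (hrs.trans hps.symm)
  obtain ⟨a, v, rfl⟩ := List.eq_nil_or_concat' pre |>.resolve_left hprene
  obtain ⟨-, hmchain, hlink⟩ := List.isChain_append.1 hrchain
  obtain ⟨-, hmnd, hdisj⟩ := List.nodup_append'.1 hrnd
  have hm : IsDiPath A w t (w :: m) :=
    ⟨⟨by simp, rfl, by rwa [List.getLast?_append_of_ne_nil _ (by simp)] at hrt, hmchain⟩, hmnd⟩
  obtain ⟨q, ⟨hq, hqdisj⟩, hqmin⟩ := Set.exists_min_image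
    {q | IsDiPath A w t q ∧ ∀ y ∈ a ++ [v], y ∉ q} (pathCost c)
    ((finite_setOf_nodup V).subset fun _ h => h.1.2) ⟨w :: m, hm, hdisj⟩
  obtain ⟨suf, rfl⟩ := List.head?_eq_some_iff.1 hq.1.2.1
  refine ⟨a ++ [v] ++ w :: suf, ⟨a ++ [v], v, w, suf, rfl, List.prefix_append _ _, by simp,
    by simpa using hlink, ?_, fun h => hqdisj w h (by simp), hq, hqdisj,
    fun r hr hrdisj => hqmin r ⟨hr, hrdisj⟩⟩, ?_⟩
  · simp only [List.append_assoc, List.singleton_append] at hpnd ⊢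
    intro h
    exact hhead (congrArg some (eq_of_mem_arcsOf_of_nodup hpnd h))
  · simp only [List.append_assoc, List.singleton_append, pathCost_append_cons_cons]
    gcongr
    exact hqmin _ ⟨hm, hdisj⟩

/-- If `p₁` is a shortest simple `s`-`t`-path and at least two simple
`s`-`t`-paths exist, then the candidate set `Q` is nonempty, the minimum of `c` over `Q`
is attained and equals the cost of a second shortest simple `s`-`t`-path, and every path
in `Q` attaining this minimum is a second shortest simple `s`-`t`-path. -/
theorem candidateSet_min_is_secondShortest {V : Type*} [Fintype V] [DecidableEq V]
    (A : V → V → Prop) (c : V → V → NNReal) (s t : V) (p₁ : List V)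
    (hp₁ : IsShortestPath A c s t p₁)
    (htwo : ∃ q₁ q₂ : List V, IsDiPath A s t q₁ ∧ IsDiPath A s t q₂ ∧ q₁ ≠ q₂) :
    (candidateSet A c t p₁).Nonempty ∧
    (∃ q ∈ candidateSet A c t p₁,
      (∀ q' ∈ candidateSet A c t p₁, pathCost c q ≤ pathCost c q') ∧
      IsSecondShortestPath A c s t p₁ q) ∧
    (∀ q ∈ candidateSet A c t p₁,
      (∀ q' ∈ candidateSet A c t p₁, pathCost c q ≤ pathCost c q') →
      IsSecondShortestPath A c s t p₁ q) := by
  have hmin : ∀ q ∈ candidateSet A c t p₁,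
      (∀ q' ∈ candidateSet A c t p₁, pathCost c q ≤ pathCost c q') →
      IsSecondShortestPath A c s t p₁ q := by
    intro q hq hle
    obtain ⟨hpath, hne⟩ := isDiPath_of_mem_candidateSet hp₁.1 hq
    refine ⟨hpath, hne, fun r hr hrne => ?_⟩
    obtain ⟨q', hq', hq'r⟩ := exists_mem_candidateSet_pathCost_le (c := c) hp₁.1 hr hrne
    exact (hle q' hq').trans hq'r
  have hnonempty : (candidateSet A c t p₁).Nonempty := by
    obtain ⟨q₁, q₂, h₁, h₂, hne⟩ := htwo
    obtain ⟨r, hr, hrne⟩ : ∃ r, IsDiPath A s t r ∧ r ≠ p₁ := by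
      by_cases h : q₁ = p₁
      · exact ⟨q₂, h₂, fun h' => hne (h.trans h'.symm)⟩
      · exact ⟨q₁, h₁, h⟩
    obtain ⟨q, hq, -⟩ := exists_mem_candidateSet_pathCost_le (c := c) hp₁.1 hr hrne
    exact ⟨q, hq⟩
  obtain ⟨q, hq, hle⟩ := Set.exists_min_image (candidateSet A c t p₁) (pathCost c)
    ((finite_setOf_nodup V).subset fun _ h => (isDiPath_of_mem_candidateSet hp₁.1 h).1.2)
    hnonempty
  exact ⟨hnonempty, ⟨q, hq, hle, hmin q hq hle⟩, hmin⟩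
end

section
/- Let D = (V, A) be a directed graph with nonnegative arc costs c, let p₁ be a shortest simple s-t-path, and let p₂ be a second shortest simple s-t-path with p₂ ≠ p₁. Let v be the deviation node of p₂, i.e., p₂ = p₁[s..v] ∘ (v,w) ∘ p₂[w..t] with p₁[s..v] the longest common prefix of p₂ and p₁ and (v,w) not an arc of p₁, and let (v,w₁) be the arc of p₁ leaving v. Then the suffix p₂[v..t] = (v,w) ∘ p₂[w..t] is a shortest v-t-path in the graph D with the single arc (v,w₁) deleted: for every simple v-t-path r in D not using the arc (v,w₁), c(p₂[v..t]) ≤ c(r). In particular, a second shortest simple s-t-path belongs to the solution set of the Replacement Path problem for p₁. -/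
/-- The cost of a walk is additive when the walk is split at a node. -/
theorem pathCost_append_cons {V : Type*} (c : V → V → NNReal) (x : List V) (u : V) (y : List V) :
    pathCost c (x ++ u :: y) = pathCost c (x ++ [u]) + pathCost c (u :: y) := by
  induction x with
  | nil => simp [pathCost, arcsOf]
  | cons a x ih =>
    cases x with
    | nil => simp [pathCost, arcsOf]
    | cons b x =>
      simp only [pathCost, arcsOf, List.cons_append, List.tail_cons, List.zip_cons_cons,
        List.map_cons, List.sum_cons, add_assoc] at ih ⊢
      rw [ih]

theorem mk_mem_arcsOf_append {V : Type*} (l : List V) (v w : V) (m : List V) :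
    (v, w) ∈ arcsOf (l ++ v :: w :: m) := by
  induction l with
  | nil => simp [arcsOf]
  | cons a l ih =>
    cases l with
    | nil => simp [arcsOf]
    | cons b l =>
      simp only [arcsOf, List.cons_append, List.tail_cons, List.zip_cons_cons] at ih ⊢
      exact List.mem_cons_of_mem _ ih

/-- A list with an element satisfying `P` splits at the first such element. -/
theorem List.exists_eq_append_cons_first {V : Type*} (P : V → Prop) {l : List V}
    (h : ∃ u ∈ l, P u) : ∃ x u y, l = x ++ u :: y ∧ P u ∧ ∀ z ∈ x, ¬ P z := by
  induction l with
  | nil => simp at h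
  | cons a l ih =>
    by_cases ha : P a
    · exact ⟨[], a, l, rfl, ha, by simp⟩
    · obtain ⟨x, u, y, rfl, hu, hx⟩ := ih (by simpa [ha] using h)
      exact ⟨a :: x, u, y, rfl, hu, by simpa [ha] using hx⟩

/-- Two simple paths meeting at `u`, the first part of the one avoiding the second part of the
other, can be joined at `u` to a simple path. -/
theorem IsDiPath.splice {V : Type*} {A : V → V → Prop} {s t s' t' u : V} {x y x' y' : List V}
    (h : IsDiPath A s t (x ++ u :: y)) (h' : IsDiPath A s' t' (x' ++ u :: y'))
    (hdisj : ∀ z ∈ x, z ∉ u :: y') : IsDiPath A s t' (x ++ u :: y') := by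
  obtain ⟨⟨-, hs, -, hc⟩, hn⟩ := h
  obtain ⟨⟨-, -, ht', hc'⟩, hn'⟩ := h'
  refine ⟨⟨by simp, ?_, ?_, ?_⟩, ?_⟩
  · cases x <;> simpa using hs
  · simpa [List.getLast?_append] using ht'
  · exact List.isChain_split.2 ⟨(List.isChain_split.1 hc).1, (List.isChain_split.1 hc').2⟩
  · exact List.nodup_append'.2 ⟨(List.nodup_append'.1 hn).1, (List.nodup_append'.1 hn').2.1,
      fun z hz => hdisj z hz⟩

/-- Let `p₁` be a shortest and `p₂` a second shortest simple
`s`-`t`-path, deviating from `p₁` at the deviation node `v` via the deviation arc `(v,w)`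
(`pre = p₁[s..v]` is the longest common prefix of `p₂` and `p₁`), and let `(v,w₁)` be the
arc of `p₁` leaving `v`. Then the suffix `p₂[v..t] = v :: w :: suf` is a shortest
`v`-`t`-path in `D` with the single arc `(v,w₁)` deleted: `c(p₂[v..t]) ≤ c(r)` for every
simple `v`-`t`-path `r` not using the arc `(v,w₁)`. In particular, a second shortest
simple `s`-`t`-path belongs to the Replacement Path solution set for `p₁`. -/
theorem secondShortest_suffix_shortest_replacement {V : Type*}
    (A : V → V → Prop) (c : V → V → NNReal) (s t : V) (p₁ p₂ : List V)
    (hp₁ : IsShortestPath A c s t p₁)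
    (hp₂ : IsSecondShortestPath A c s t p₁ p₂)
    (pre : List V) (v w w₁ : V) (suf : List V)
    (hsplit : p₂ = pre ++ w :: suf)
    (hv : pre.getLast? = some v)
    (hpre : pre <+: p₁)
    (hlongest : ¬ (pre ++ [w]) <+: p₁)
    (hw₁ : (pre ++ [w₁]) <+: p₁) :
    ∀ r, IsDiPath A v t r → (v, w₁) ∉ arcsOf r →
      pathCost c (v :: w :: suf) ≤ pathCost c r := by
  intro r hr hvr
  have hvr_mem : v ∈ r := by
    obtain ⟨⟨-, hhead, -, -⟩, -⟩ := hr
    exact List.mem_of_head? hhead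
  obtain ⟨x, u, y, rfl, hu, hx⟩ := List.exists_eq_append_cons_first (· ∈ r)
    ⟨v, List.mem_of_getLast? hv, hvr_mem⟩
  obtain ⟨r₁, r₂, rfl⟩ := List.append_of_mem hu
  obtain ⟨b, hb⟩ : ∃ b, u :: y = b ++ [v] := by
    refine List.getLast?_eq_some_iff.1 ?_
    simpa [List.getLast?_append] using hv
  obtain ⟨z, rfl⟩ := hw₁
  have hp₂path := hp₂.1
  have hpath : IsDiPath A s t (x ++ u :: r₂) := by
    rw [hsplit, List.append_assoc, List.cons_append] at hp₂path
    exact hp₂path.splice hr fun a ha hmem => hx a ha (List.mem_append_right _ hmem)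
  have hne : x ++ u :: r₂ ≠ x ++ u :: y ++ [w₁] ++ z := by
    intro heq
    have htail : u :: r₂ = b ++ v :: w₁ :: z := by
      have : u :: r₂ = (u :: y) ++ w₁ :: z := by simpa using heq
      simpa [hb] using this
    apply hvr
    rw [htail, ← List.append_assoc]
    exact mk_mem_arcsOf_append _ _ _ _
  have hle := hp₂.2.2 _ hpath hne
  have hp₂cost : pathCost c p₂ = pathCost c (x ++ u :: y) + pathCost c (v :: w :: suf) := by
    rw [hsplit, hb]
    simpa using pathCost_append_cons c (x ++ b) v (w :: suf)
  rw [hp₂cost, pathCost_append_cons c x u r₂, pathCost_append_cons c x u y, add_assoc] at hle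
  rw [pathCost_append_cons c r₁ u r₂]
  exact (le_add_self.trans (le_of_add_le_add_left hle)).trans le_add_self
end
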